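/- arXiv:1205.2479 — 2 statements merged into one kernel-verified Lean document; each statement's English description precedes it below -/
import Mathlib

section
/- Let x : [0,∞) → ℝ be a càdlàg function with x(0−) := x(0), let t > 0, and let U ⊆ ℝ be an open set with 0 ∉ U. For m ≥ 1 set F_m = {z ∈ ℝ : |z − y| ≥ 1/m for all y ∈ Uᶜ}, and for k ≥ 1 set Θ_k = {(p,q) ∈ ℚ² : 0 < p < q < t and |p − q| ≤ 1/k}. Then the following are equivalent: (i) there exists s ∈ (0,t) with x(s) − x(s−) ∈ U; (ii) there exist m ≥ 1 and n ≥ 1 such that for every k ≥ n there exists (p,q) ∈ Θ_k with x(q) − x(p) ∈ F_m. -/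
open Filter Topology Set

/-!
Near any time `s`, the increments `x q - x p` with `p < q` have only two possible limits: `0`, when
`p` and `q` approach `s` from the same side, and the jump of `x` at `s`, when they straddle it.
A jump in `U` is therefore approximated by rational increments, which lie well inside `U`.
Conversely, if no jump lies in `U`, then every neighbourhood of `Uᶜ` contains all increments over
sufficiently short intervals, by compactness of `[0, t]`.
-/

section Increments

open scoped Uniformity

variable {α E : Type*} {x : α → E}

lemma eventually_uniformity_of_forall_eventually_nhds_diag [UniformSpace α] {K : Set α}
    (hK : IsCompact K) {P : α × α → Prop} (hP : ∀ s ∈ K, ∀ᶠ z in 𝓝 (s, s), P z) :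
    ∀ᶠ z in 𝓤 α, z.1 ∈ K → P z := by
  have hsquare : ∀ s ∈ K, ∃ N ∈ 𝓝 s, ∀ p ∈ N, ∀ q ∈ N, P (p, q) := fun s hs ↦ by
    obtain ⟨N, hN, hNP⟩ := mem_prod_same_iff.1 (nhds_prod_eq (x := s) (y := s) ▸ hP s hs)
    exact ⟨N, hN, fun p hp q hq ↦ hNP (mk_mem_prod hp hq)⟩
  choose N hN hNP using hsquare
  obtain ⟨W, hW, hball⟩ := lebesgue_number_lemma_nhds' hK hN
  filter_upwards [hW] with z hz hzK
  obtain ⟨s, hs⟩ := hball z.1 hzK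
  exact hNP s s.2 z.1 (hs (UniformSpace.mem_ball_self z.1 hW)) z.2 (hs hz)

variable [AddGroup E] [TopologicalSpace E] [IsTopologicalAddGroup E]

lemma tendsto_increment_prod {L R : Filter α} {l r : E}
    (hL : Tendsto x L (𝓝 l)) (hR : Tendsto x R (𝓝 r)) :
    Tendsto (fun z : α × α ↦ x z.2 - x z.1) (L ×ˢ R) (𝓝 (r - l)) :=
  (hR.comp tendsto_snd).sub (hL.comp tendsto_fst)

lemma eventually_increment_mem_of_tendsto [LinearOrder α] [TopologicalSpace α] {S : Set α} {s : α}
    {l r : E} {V : Set E} (hl : Tendsto x (𝓝[S ∩ Iio s] s) (𝓝 l))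
    (hr : Tendsto x (𝓝[S ∩ Ici s] s) (𝓝 r)) (hV : V ∈ 𝓝 0) (hVjump : V ∈ 𝓝 (r - l)) :
    ∀ᶠ z in 𝓝[S] s ×ˢ 𝓝[S] s, z.1 < z.2 → x z.2 - x z.1 ∈ V := by
  have hsplit : 𝓝[S] s = 𝓝[S ∩ Iio s] s ⊔ 𝓝[S ∩ Ici s] s := by
    rw [← nhdsWithin_union, ← inter_union_distrib_left, Iio_union_Ici, inter_univ]
  have hleft := (tendsto_increment_prod hl hl).eventually_mem ((sub_self l).symm ▸ hV)
  have hright := (tendsto_increment_prod hr hr).eventually_mem ((sub_self r).symm ▸ hV)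
  have hacross := (tendsto_increment_prod hl hr).eventually_mem hVjump
  have hreversed : ∀ᶠ z in 𝓝[S ∩ Ici s] s ×ˢ 𝓝[S ∩ Iio s] s, z.2 < z.1 :=
    mem_of_superset (prod_mem_prod self_mem_nhdsWithin self_mem_nhdsWithin)
      fun z hz ↦ hz.2.2.trans_le hz.1.2
  simp only [hsplit, sup_prod, prod_sup, eventually_sup]
  exact ⟨⟨hleft.mono fun _ h _ ↦ h, hreversed.mono fun _ h h' ↦ absurd h' h.not_gt⟩,
    hacross.mono fun _ h _ ↦ h, hright.mono fun _ h _ ↦ h⟩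

lemma eventually_uniformity_increment_mem_of_tendsto [LinearOrder α] [UniformSpace α]
    {S K : Set α} {V : Set E} (hK : IsCompact K) (hSK : S ⊆ K) (hV : V ∈ 𝓝 0)
    (hlim : ∀ s ∈ K, ∃ l r, Tendsto x (𝓝[S ∩ Iio s] s) (𝓝 l) ∧
      Tendsto x (𝓝[S ∩ Ici s] s) (𝓝 r) ∧ V ∈ 𝓝 (r - l)) :
    ∀ᶠ z in 𝓤 α, z.1 ∈ S → z.2 ∈ S → z.1 < z.2 → x z.2 - x z.1 ∈ V := by
  have hlocal : ∀ s ∈ K, ∀ᶠ z in 𝓝 (s, s), z ∈ S ×ˢ S → z.1 < z.2 → x z.2 - x z.1 ∈ V := by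
    intro s hs
    obtain ⟨l, r, hl, hr, hVjump⟩ := hlim s hs
    rw [← eventually_nhdsWithin_iff, nhdsWithin_prod_eq]
    exact eventually_increment_mem_of_tendsto hl hr hV hVjump
  filter_upwards [eventually_uniformity_of_forall_eventually_nhds_diag hK hlocal]
    with z hz hz₁ hz₂
  exact hz (hSK hz₁) ⟨hz₁, hz₂⟩

lemma eventually_uniformity_increment_mem_of_cadlag [LinearOrder α] [UniformSpace α]
    [CompactIccSpace α] {a b : α} {xm : α → E} {V : Set E}
    (hrc : ∀ s ∈ Ico a b, Tendsto x (𝓝[≥] s) (𝓝 (x s)))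
    (hll : ∀ s ∈ Ioc a b, Tendsto x (𝓝[<] s) (𝓝 (xm s)))
    (hV : V ∈ 𝓝 0) (hVjump : ∀ s ∈ Ioo a b, V ∈ 𝓝 (x s - xm s)) :
    ∀ᶠ z in 𝓤 α, z.1 ∈ Ioo a b → z.2 ∈ Ioo a b → z.1 < z.2 → x z.2 - x z.1 ∈ V := by
  rcases le_or_gt b a with hba | hab
  · exact .of_forall fun z hz ↦ absurd (hz.1.trans hz.2) hba.not_gt
  refine eventually_uniformity_increment_mem_of_tendsto isCompact_Icc Ioo_subset_Icc_self hV
    fun s hs ↦ ?_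
  have hright (h : s < b) : Tendsto x (𝓝[Ioo a b ∩ Ici s] s) (𝓝 (x s)) :=
    (hrc s ⟨hs.1, h⟩).mono_left (nhdsWithin_mono s inter_subset_right)
  have hleft (h : a < s) : Tendsto x (𝓝[Ioo a b ∩ Iio s] s) (𝓝 (xm s)) :=
    (hll s ⟨h, hs.2⟩).mono_left (nhdsWithin_mono s inter_subset_right)
  -- At an endpoint only one side meets `Ioo a b`, so both limits may be taken equal.
  rcases hs.1.eq_or_lt with rfl | has
  · have hempty : Ioo a b ∩ Iio a = ∅ := by grind
    exact ⟨x a, x a, by simp [hempty], hright hab, by simpa using hV⟩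
  rcases hs.2.eq_or_lt with rfl | hsb
  · have hempty : Ioo a s ∩ Ici s = ∅ := by grind
    exact ⟨xm s, xm s, hleft has, by simp [hempty], by simpa using hV⟩
  · exact ⟨xm s, x s, hleft has, hright hsb, hVjump s ⟨has, hsb⟩⟩

end Increments

lemma exists_of_eventually_nhdsWithin_of_denseRange {ι X : Type*} [TopologicalSpace X] {f : ι → X}
    (hf : DenseRange f) {G : Set X} (hG : IsOpen G) {c : X} [(𝓝[G] c).NeBot] {P : X → Prop}
    (hP : ∀ᶠ z in 𝓝[G] c, P z) : ∃ i, P (f i) := by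
  obtain ⟨W, hW, hcW, hWP⟩ := mem_nhdsWithin.1 hP
  have hne : (W ∩ G).Nonempty :=
    nonempty_of_mem (inter_mem (mem_nhdsWithin_of_mem_nhds (hW.mem_nhds hcW)) self_mem_nhdsWithin)
  obtain ⟨i, hi⟩ := hf.exists_mem_open (hW.inter hG) hne
  exact ⟨i, hWP hi⟩

lemma exists_rat_increment_mem_of_tendsto {E : Type*} [AddGroup E] [TopologicalSpace E]
    [IsTopologicalAddGroup E] {x : ℝ → E} {a b s δ : ℝ} {l r : E} {V : Set E} (has : a < s)
    (hsb : s < b) (hδ : 0 < δ) (hl : Tendsto x (𝓝[<] s) (𝓝 l)) (hr : Tendsto x (𝓝[>] s) (𝓝 r))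
    (hV : V ∈ 𝓝 (r - l)) :
    ∃ p q : ℚ, a < p ∧ p < q ∧ q < b ∧ |(p : ℝ) - q| ≤ δ ∧ x q - x p ∈ V := by
  have hincrement : ∀ᶠ z in 𝓝[<] s ×ˢ 𝓝[>] s, x z.2 - x z.1 ∈ V :=
    (tendsto_increment_prod hl hr).eventually_mem hV
  have hp : ∀ᶠ p in 𝓝[<] s, p ∈ Ioo (max a (s - δ / 2)) s :=
    Ioo_mem_nhdsLT (max_lt has (by linarith))
  have hq : ∀ᶠ q in 𝓝[>] s, q ∈ Ioo s (min b (s + δ / 2)) :=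
    Ioo_mem_nhdsGT (lt_min hsb (by linarith))
  have hall := hincrement.and (hp.prod_mk hq)
  rw [← nhdsWithin_prod_eq] at hall
  have : (𝓝[Iio s ×ˢ Ioi s] (s, s)).NeBot := by rw [nhdsWithin_prod_eq]; infer_instance
  obtain ⟨⟨p, q⟩, hpqV, hp, hq⟩ := exists_of_eventually_nhdsWithin_of_denseRange
    ((Rat.denseRange_cast (𝕜 := ℝ)).prodMap Rat.denseRange_cast) (isOpen_Iio.prod isOpen_Ioi) hall
  simp only [Prod.map_fst, Prod.map_snd, mem_Ioo, max_lt_iff, lt_min_iff] at hp hq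
  exact ⟨p, q, hp.1.1, by exact_mod_cast hp.2.trans hq.1, hq.2.1,
    abs_le.2 ⟨by linarith, by linarith⟩, hpqV⟩

lemma exists_nat_compl_thickening_compl_mem_nhds {X : Type*} [PseudoMetricSpace X] {U : Set X}
    (hU : IsOpen U) {z : X} (hz : z ∈ U) :
    ∃ m : ℕ, 1 ≤ m ∧ (Metric.thickening (1 / (m : ℝ)) Uᶜ)ᶜ ∈ 𝓝 z := by
  obtain ⟨ε, hε, hdisj⟩ := (disjoint_singleton_left.2 (not_not.2 hz)).exists_thickenings
    isCompact_singleton hU.isClosed_compl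
  obtain ⟨m, hm⟩ := exists_nat_one_div_lt hε
  refine ⟨m + 1, by omega, mem_of_superset (Metric.ball_mem_nhds z hε) ?_⟩
  rw [← Metric.thickening_singleton, Nat.cast_add_one]
  exact (hdisj.mono_right (Metric.thickening_mono hm.le _)).subset_compl_right

lemma notMem_thickening_compl_iff {E : Type*} [SeminormedAddCommGroup E] {U : Set E} {ε : ℝ}
    {z : E} : z ∉ Metric.thickening ε Uᶜ ↔ ∀ y ∉ U, ε ≤ ‖z - y‖ := by
  simp [Metric.mem_thickening_iff, dist_eq_norm]

theorem jump_in_open_iff_increments_in_closed_approx_general {E : Type*}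
    [SeminormedAddCommGroup E] {x xm : ℝ → E} {a b : ℝ}
    (hrc : ∀ s ∈ Ico a b, Tendsto x (𝓝[≥] s) (𝓝 (x s)))
    (hll : ∀ s ∈ Ioc a b, Tendsto x (𝓝[<] s) (𝓝 (xm s)))
    {U : Set E} (hU : IsOpen U) (hU0 : (0 : E) ∉ U) :
    (∃ s : ℝ, a < s ∧ s < b ∧ x s - xm s ∈ U) ↔
      ∃ m : ℕ, 1 ≤ m ∧ ∃ n : ℕ, 1 ≤ n ∧ ∀ k : ℕ, n ≤ k →
        ∃ p q : ℚ, a < p ∧ p < q ∧ (q : ℝ) < b ∧ |(p : ℝ) - q| ≤ 1 / (k : ℝ) ∧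
          ∀ y ∉ U, 1 / (m : ℝ) ≤ ‖x q - x p - y‖ := by
  simp only [← notMem_thickening_compl_iff]
  constructor
  · rintro ⟨s, has, hsb, hsU⟩
    obtain ⟨m, hm, hV⟩ := exists_nat_compl_thickening_compl_mem_nhds hU hsU
    have hright : Tendsto x (𝓝[>] s) (𝓝 (x s)) :=
      (hrc s ⟨has.le, hsb⟩).mono_left (nhdsWithin_mono s Ioi_subset_Ici_self)
    exact ⟨m, hm, 1, le_rfl, fun k hk ↦ exists_rat_increment_mem_of_tendsto has hsb
      (Nat.one_div_cast_pos (by omega)) (hll s ⟨has, hsb.le⟩) hright hV⟩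
  · rintro ⟨m, hm, n, -, hincrement⟩
    by_contra! hjump
    have hV : ∀ y ∉ U, Metric.thickening (1 / (m : ℝ)) Uᶜ ∈ 𝓝 y := fun y hy ↦
      Metric.isOpen_thickening.mem_nhds
        (Metric.self_subset_thickening (Nat.one_div_cast_pos (by omega)) _ hy)
    obtain ⟨δ, hδ, hshort⟩ := Metric.uniformity_basis_dist.eventually_iff.1
      (eventually_uniformity_increment_mem_of_cadlag hrc hll (hV 0 hU0)
        fun s hs ↦ hV _ (hjump s hs.1 hs.2))
    obtain ⟨k, hkδ, hnk⟩ := ((tendsto_one_div_atTop_nhds_zero_nat.eventually_lt_const hδ).and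
      (eventually_ge_atTop n)).exists
    obtain ⟨p, q, hap, hpq, hqb, hdist, hnotMem⟩ := hincrement k hnk
    have hpq' : (p : ℝ) < q := Rat.cast_lt.2 hpq
    exact hnotMem (hshort (x := (p, q)) (hdist.trans_lt hkδ) ⟨hap, hpq'.trans hqb⟩
      ⟨hap.trans hpq', hqb⟩ hpq')

/-- Let `x : [0,∞) → ℝ` be càdlàg with left limits `xm` and convention `xm 0 = x 0`, let
`t > 0`, and let `U ⊆ ℝ` be open with `0 ∉ U`. With
`F m = {z : ℝ | ∀ y ∉ U, 1/m ≤ |z - y|}` and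
`Θ k = {(p, q) ∈ ℚ² | 0 < p < q < t, |p - q| ≤ 1/k}`, the following are equivalent:
(i) there is `s ∈ (0, t)` with `x s - xm s ∈ U`;
(ii) there are `m, n ≥ 1` such that for every `k ≥ n` there is `(p, q) ∈ Θ k` with
`x q - x p ∈ F m`. -/
theorem jump_in_open_iff_increments_in_closed_approx
    (x xm : ℝ → ℝ)
    (hrc : ∀ s : ℝ, 0 ≤ s → Tendsto x (𝓝[≥] s) (𝓝 (x s)))
    (hll : ∀ s : ℝ, 0 < s → Tendsto x (𝓝[<] s) (𝓝 (xm s)))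
    (hx0 : xm 0 = x 0)
    (t : ℝ) (ht : 0 < t)
    (U : Set ℝ) (hU : IsOpen U) (hU0 : (0 : ℝ) ∉ U) :
    (∃ s : ℝ, 0 < s ∧ s < t ∧ x s - xm s ∈ U) ↔
      (∃ m : ℕ, 1 ≤ m ∧ ∃ n : ℕ, 1 ≤ n ∧ ∀ k : ℕ, n ≤ k →
        ∃ p q : ℚ, 0 < p ∧ p < q ∧ (q : ℝ) < t ∧ |(p : ℝ) - (q : ℝ)| ≤ 1 / (k : ℝ) ∧
          ∀ y : ℝ, y ∉ U → 1 / (m : ℝ) ≤ |x (q : ℝ) - x (p : ℝ) - y|) := by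
  simpa only [Rat.cast_pos, Real.norm_eq_abs] using
    jump_in_open_iff_increments_in_closed_approx_general
      (fun s hs ↦ hrc s hs.1) (fun s hs ↦ hll s hs.1) hU hU0
end

section
/- Let x : [0,∞) → ℝ be a càdlàg function with x(0−) := x(0), let t > 0, and let F ⊆ ℝ be a closed set with 0 ∉ F. Suppose (p_k)_{k≥1} and (q_k)_{k≥1} are monotone sequences of real numbers with 0 < p_k < q_k < t for all k, |p_k − q_k| → 0, and x(q_k) − x(p_k) ∈ F for all k. Then both sequences converge to a common limit s satisfying 0 < s < t, and moreover lim_k x(p_k) = x(s−), lim_k x(q_k) = x(s), and x(s) − x(s−) ∈ F. -/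
/-!
Being monotone and bounded, `p` converges to some `s`, and then so does `q`. If `s ≤ p k` for
infinitely many `k`, then along those `k` both `x (p k)` and `x (q k)` tend to `x s`; if `q k < s`
for infinitely many `k`, then along those both tend to `x (s-)`. Either way some increments in `F`
tend to `0`, which is impossible because `F` is closed and misses `0`. Hence eventually
`p k < s ≤ q k`, so the two sequences see the two one-sided limits of `x` at `s`.
-/

open Filter Topology Set

lemma exists_tendsto_atTop_of_monotone_or_antitone {ι α : Type*} [Preorder ι]
    [ConditionallyCompleteLinearOrder α] [TopologicalSpace α] [OrderTopology α] {u : ι → α}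
    (hu : Monotone u ∨ Antitone u) (hbelow : BddBelow (range u)) (habove : BddAbove (range u)) :
    ∃ s, Tendsto u atTop (𝓝 s) :=
  hu.elim (fun hmono => ⟨_, tendsto_atTop_ciSup hmono habove⟩)
    fun hanti => ⟨_, tendsto_atTop_ciInf hanti hbelow⟩

section Increments

variable {ι α E : Type*} [TopologicalSpace α] [TopologicalSpace E] [AddGroup E] [ContinuousSub E]
  {l : Filter ι} {x : α → E} {s : α} {F : Set E} {p q : ι → α}

lemma eventually_not_mem_and_mem_of_sub_mem {S : Set α} {c : E} (hx : Tendsto x (𝓝[S] s) (𝓝 c))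
    (hF : Fᶜ ∈ 𝓝 0) (hp : Tendsto p l (𝓝 s)) (hq : Tendsto q l (𝓝 s))
    (hmem : ∀ k, x (q k) - x (p k) ∈ F) : ∀ᶠ k in l, ¬(p k ∈ S ∧ q k ∈ S) := by
  let A : Set ι := {k | p k ∈ S ∧ q k ∈ S}
  have hA : ∀ᶠ k in l ⊓ 𝓟 A, k ∈ A := mem_inf_of_right (mem_principal_self A)
  have limit_along {u : ι → α} (hu : Tendsto u l (𝓝 s)) (huA : ∀ k ∈ A, u k ∈ S) :
      Tendsto (fun k => x (u k)) (l ⊓ 𝓟 A) (𝓝 c) :=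
    hx.comp (tendsto_nhdsWithin_iff.2 ⟨hu.mono_left inf_le_left, hA.mono huA⟩)
  have hincr : Tendsto (fun k => x (q k) - x (p k)) (l ⊓ 𝓟 A) (𝓝 0) := by
    simpa only [sub_self] using
      (limit_along hq fun _ hk => hk.2).sub (limit_along hp fun _ hk => hk.1)
  exact (eventually_inf_principal.1 (hincr hF)).mono fun k hk hkA => hk hkA (hmem k)

variable [LinearOrder α]

lemma eventually_lt_of_sub_mem {b : E} (hright : Tendsto x (𝓝[≥] s) (𝓝 b)) (hF : Fᶜ ∈ 𝓝 0)
    (hp : Tendsto p l (𝓝 s)) (hq : Tendsto q l (𝓝 s)) (hpq : ∀ k, p k ≤ q k)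
    (hmem : ∀ k, x (q k) - x (p k) ∈ F) : ∀ᶠ k in l, p k < s :=
  (eventually_not_mem_and_mem_of_sub_mem hright hF hp hq hmem).mono fun k hk =>
    not_le.1 fun hsp => hk ⟨hsp, hsp.trans (hpq k)⟩

lemma eventually_le_of_sub_mem {a : E} (hleft : Tendsto x (𝓝[<] s) (𝓝 a)) (hF : Fᶜ ∈ 𝓝 0)
    (hp : Tendsto p l (𝓝 s)) (hq : Tendsto q l (𝓝 s)) (hpq : ∀ k, p k ≤ q k)
    (hmem : ∀ k, x (q k) - x (p k) ∈ F) : ∀ᶠ k in l, s ≤ q k :=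
  (eventually_not_mem_and_mem_of_sub_mem hleft hF hp hq hmem).mono fun k hk =>
    not_lt.1 fun hqs => hk ⟨(hpq k).trans_lt hqs, hqs⟩

end Increments

theorem jump_in_closed_set_of_increments_in_closed_set_general {ι E : Type*} [TopologicalSpace E]
    [AddGroup E] [ContinuousSub E] {l : Filter ι} [l.NeBot] {x xm : ℝ → E}
    (hrc : ∀ s : ℝ, 0 ≤ s → Tendsto x (𝓝[≥] s) (𝓝 (x s)))
    (hll : ∀ s : ℝ, 0 < s → Tendsto x (𝓝[<] s) (𝓝 (xm s)))
    {t : ℝ} {F : Set E} (hF : IsClosed F) (hF0 : (0 : E) ∉ F) {p q : ι → ℝ} {s : ℝ}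
    (hps : Tendsto p l (𝓝 s)) (hp0 : ∀ k, 0 < p k) (hpq : ∀ k, p k < q k) (hqt : ∀ k, q k < t)
    (hdist : Tendsto (fun k => |p k - q k|) l (𝓝 0)) (hmem : ∀ k, x (q k) - x (p k) ∈ F) :
    s ∈ Ioo 0 t ∧ Tendsto q l (𝓝 s) ∧
      Tendsto (fun k => x (p k)) l (𝓝 (xm s)) ∧ Tendsto (fun k => x (q k)) l (𝓝 (x s)) ∧
      x s - xm s ∈ F := by
  have hqs : Tendsto q l (𝓝 s) := by
    simpa using hps.sub ((tendsto_zero_iff_abs_tendsto_zero _).2 hdist)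
  have hF_compl : Fᶜ ∈ 𝓝 0 := hF.compl_mem_nhds hF0
  have hpq_le : ∀ k, p k ≤ q k := fun k => (hpq k).le
  have hright := hrc s (ge_of_tendsto' hps fun k => (hp0 k).le)
  have hp_lt : ∀ᶠ k in l, p k < s := eventually_lt_of_sub_mem hright hF_compl hps hqs hpq_le hmem
  have hs0 : 0 < s := let ⟨k, hk⟩ := hp_lt.exists; (hp0 k).trans hk
  have hleft := hll s hs0
  have hq_ge : ∀ᶠ k in l, s ≤ q k := eventually_le_of_sub_mem hleft hF_compl hps hqs hpq_le hmem
  have hst : s < t := let ⟨k, hk⟩ := hq_ge.exists; hk.trans_lt (hqt k)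
  have hxp : Tendsto (fun k => x (p k)) l (𝓝 (xm s)) :=
    hleft.comp (tendsto_nhdsWithin_iff.2 ⟨hps, hp_lt⟩)
  have hxq : Tendsto (fun k => x (q k)) l (𝓝 (x s)) :=
    hright.comp (tendsto_nhdsWithin_iff.2 ⟨hqs, hq_ge⟩)
  exact ⟨⟨hs0, hst⟩, hqs, hxp, hxq, hF.mem_of_tendsto (hxq.sub hxp) (.of_forall hmem)⟩

/-- Let `x : [0,∞) → ℝ` be càdlàg with left limits `xm` and convention `xm 0 = x 0`, let
`t > 0`, and let `F ⊆ ℝ` be closed with `0 ∉ F`. If `(p k)` and `(q k)` are monotone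
sequences with `0 < p k < q k < t`, `|p k - q k| → 0` and `x (q k) - x (p k) ∈ F` for all
`k`, then both sequences converge to a common limit `s ∈ (0, t)` with
`x (p k) → xm s`, `x (q k) → x s`, and `x s - xm s ∈ F`. -/
theorem jump_in_closed_set_of_increments_in_closed_set
    (x xm : ℝ → ℝ)
    (hrc : ∀ s : ℝ, 0 ≤ s → Tendsto x (𝓝[≥] s) (𝓝 (x s)))
    (hll : ∀ s : ℝ, 0 < s → Tendsto x (𝓝[<] s) (𝓝 (xm s)))
    (hx0 : xm 0 = x 0)
    (t : ℝ) (ht : 0 < t)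
    (F : Set ℝ) (hF : IsClosed F) (hF0 : (0 : ℝ) ∉ F)
    (p q : ℕ → ℝ)
    (hpmono : Monotone p ∨ Antitone p) (hqmono : Monotone q ∨ Antitone q)
    (hp0 : ∀ k, 0 < p k) (hpq : ∀ k, p k < q k) (hqt : ∀ k, q k < t)
    (hdist : Tendsto (fun k => |p k - q k|) atTop (𝓝 0))
    (hmem : ∀ k, x (q k) - x (p k) ∈ F) :
    ∃ s : ℝ, 0 < s ∧ s < t ∧
      Tendsto p atTop (𝓝 s) ∧ Tendsto q atTop (𝓝 s) ∧
      Tendsto (fun k => x (p k)) atTop (𝓝 (xm s)) ∧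
      Tendsto (fun k => x (q k)) atTop (𝓝 (x s)) ∧
      x s - xm s ∈ F := by
  obtain ⟨s, hps⟩ := exists_tendsto_atTop_of_monotone_or_antitone hpmono
    ⟨0, forall_mem_range.2 fun k => (hp0 k).le⟩
    ⟨t, forall_mem_range.2 fun k => ((hpq k).trans (hqt k)).le⟩
  obtain ⟨hs, hlimits⟩ := jump_in_closed_set_of_increments_in_closed_set_general
    hrc hll hF hF0 hps hp0 hpq hqt hdist hmem
  exact ⟨s, hs.1, hs.2, hps, hlimits⟩
end
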